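/- Let G be a concordance-inducing distribution function and let P ∈ [−1,1]^{d×d} be the Pearson correlation matrix of some random vector B = (B1,…,Bd) with all margins Bern(1/2). Let U be uniform on (0,1), independent of B, and define Vj = Bj·U + (1 − Bj)(1 − U) and Yj = G^{-1}(Vj) for j = 1,…,d. Then each Vj is uniform on (0,1), each Yj has distribution G, and ρ(Yi, Yj) = ρ(Bi, Bj) for all i, j; consequently P ∈ K_G, i.e., every Bern(1/2)-compatible matrix is κ_G-compatible: P^B_d(1/2) ⊆ K_G. -/

import Mathlib

open MeasureTheory ProbabilityTheory Set

noncomputable section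

/-- The uniform distribution on (0,1). -/
def unif01 : Measure ℝ := volume.restrict (Set.Ioo (0:ℝ) 1)

/-- Pearson's correlation coefficient of two real random variables. -/
def pearson {Ω : Type*} [MeasurableSpace Ω] (μ : Measure Ω) (Y1 Y2 : Ω → ℝ) : ℝ :=
  ((∫ ω, Y1 ω * Y2 ω ∂μ) - (∫ ω, Y1 ω ∂μ) * (∫ ω, Y2 ω ∂μ)) /
    Real.sqrt (variance Y1 μ * variance Y2 μ)

/-- The distribution function (CDF) of a measure on ℝ. -/
def cdfOf (ν : Measure ℝ) : ℝ → ℝ := fun x => (ν (Set.Iic x)).toReal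

/-- The quantile function (generalized inverse) of a distribution function. -/
def quantileFn (G : ℝ → ℝ) (p : ℝ) : ℝ := sInf {x : ℝ | p ≤ G x}

/-- A distribution on ℝ is symmetric (about some point `m`). -/
def SymmetricDist (G : Measure ℝ) : Prop :=
  ∃ m : ℝ, G.map (fun x => 2 * m - x) = G

/-- A distribution on ℝ is non-degenerate: it is not a point mass. -/
def Nondegenerate (G : Measure ℝ) : Prop := ∀ c : ℝ, G ≠ Measure.dirac c

/-- A distribution is concordance inducing: non-degenerate, symmetric,
with finite second moment. -/
def ConcordanceInducing (G : Measure ℝ) : Prop :=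
  Nondegenerate G ∧ SymmetricDist G ∧ Integrable (fun x : ℝ => x ^ 2) G

/-- `corrSet ν d` is the set of `d×d` Pearson correlation matrices of random vectors
all of whose margins have distribution `ν`. -/
def corrSet (ν : Measure ℝ) (d : ℕ) : Set (Matrix (Fin d) (Fin d) ℝ) :=
  {P | ∃ μ : Measure (Fin d → ℝ), IsProbabilityMeasure μ ∧
        (∀ j, μ.map (fun x => x j) = ν) ∧
        (∀ i j, P i j = pearson μ (fun x => x i) (fun x => x j))}

/-- The Bernoulli distribution `Bern(p)` on ℝ. -/
def bern (p : ℝ) : Measure ℝ :=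
  ENNReal.ofReal p • Measure.dirac (1:ℝ) + ENNReal.ofReal (1 - p) • Measure.dirac (0:ℝ)

/-- The set of `d×d` correlation matrices of random vectors with `Bern(1/2)` margins. -/
def PBd (d : ℕ) : Set (Matrix (Fin d) (Fin d) ℝ) := corrSet (bern (1/2)) d

/-- The set of all `d×d` correlation matrices: symmetric positive semi-definite
matrices with entries in `[-1,1]` and unit diagonal. -/
def Pd (d : ℕ) : Set (Matrix (Fin d) (Fin d) ℝ) :=
  {P | P.IsSymm ∧ (∀ i j, P i j ∈ Set.Icc (-1:ℝ) 1) ∧ P.PosSemidef ∧ ∀ i, P i i = 1}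

lemma cdfOf_eq (G : Measure ℝ) [IsProbabilityMeasure G] : cdfOf G = cdf G := by
  ext x
  rw [cdf_eq_real]; rfl

lemma quantile_le_iff (G : Measure ℝ) [IsProbabilityMeasure G] {p : ℝ} (hp : p ∈ Ioo (0:ℝ) 1)
    (x : ℝ) : quantileFn (cdfOf G) p ≤ x ↔ p ≤ cdfOf G x := by
  rw [cdfOf_eq]
  have hne : {x : ℝ | p ≤ cdf G x}.Nonempty := by
    obtain ⟨y, hy⟩ := ((tendsto_cdf_atTop G).eventually (lt_mem_nhds hp.2)).exists
    exact ⟨y, le_of_lt hy⟩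
  have hbd : BddBelow {x : ℝ | p ≤ cdf G x} := by
    obtain ⟨y, hy⟩ := ((tendsto_cdf_atBot G).eventually (gt_mem_nhds hp.1)).exists
    refine ⟨y, fun z hz => ?_⟩
    by_contra h
    push Not at h
    have h1 := monotone_cdf G h.le
    have h2 : p ≤ cdf G z := hz
    linarith
  have hmem : p ≤ cdf G (sInf {x : ℝ | p ≤ cdf G x}) := by
    have ht : Filter.Tendsto (cdf G) (nhdsWithin (sInf {x : ℝ | p ≤ cdf G x})
        (Ioi (sInf {x : ℝ | p ≤ cdf G x}))) (nhds (cdf G (sInf {x : ℝ | p ≤ cdf G x}))) :=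
      ((cdf G).right_continuous _).tendsto.mono_left (nhdsWithin_mono _ Ioi_subset_Ici_self)
    refine ge_of_tendsto ht ?_
    filter_upwards [self_mem_nhdsWithin] with y hy
    obtain ⟨s, hs, hsy⟩ := exists_lt_of_csInf_lt hne hy
    exact le_trans hs (monotone_cdf G hsy.le)
  constructor
  · intro h
    exact hmem.trans (monotone_cdf G h)
  · intro h
    exact csInf_le hbd h

instance unif01_prob : IsProbabilityMeasure unif01 := ⟨by simp [unif01]⟩

lemma ae_unif01 : ∀ᵐ u ∂unif01, u ∈ Ioo (0:ℝ) 1 := ae_restrict_mem measurableSet_Ioo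

lemma aemeas_quantile (G : Measure ℝ) [IsProbabilityMeasure G] :
    AEMeasurable (quantileFn (cdfOf G)) unif01 := by
  refine aemeasurable_restrict_of_monotoneOn measurableSet_Ioo ?_
  intro a ha b hb hab
  rw [quantile_le_iff G ha]
  exact hab.trans ((quantile_le_iff G hb _).1 le_rfl)

lemma map_quantile (G : Measure ℝ) [IsProbabilityMeasure G] :
    unif01.map (quantileFn (cdfOf G)) = G := by
  have := Measure.isProbabilityMeasure_map (aemeas_quantile G)
  refine Measure.ext_of_Iic _ _ fun x => ?_
  rw [Measure.map_apply_of_aemeasurable (aemeas_quantile G) measurableSet_Iic]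
  have h1 : unif01 (quantileFn (cdfOf G) ⁻¹' Iic x) = unif01 (Iic (cdf G x)) := by
    refine measure_congr ?_
    filter_upwards [ae_unif01] with u hu
    have := quantile_le_iff G hu x
    rw [cdfOf_eq G] at this ⊢
    exact propext this
  have h2 : unif01 (Iic (cdf G x)) = volume (Ioc 0 (cdf G x)) := by
    rw [unif01, restrict_Ioo_eq_restrict_Ioc, Measure.restrict_apply measurableSet_Iic]
    congr 1
    ext u
    have := cdf_le_one G x
    simp only [mem_inter_iff, mem_Iic, mem_Ioc]
    constructor
    · rintro ⟨a, b, c⟩; exact ⟨b, a⟩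
    · rintro ⟨a, b⟩; exact ⟨b, a, b.trans this⟩
  rw [h1, h2, Real.volume_Ioc, sub_zero, ofReal_cdf]

lemma map_one_sub_unif01 : unif01.map (fun u => 1 - u) = unif01 := by
  have h := (Measure.measurePreserving_sub_left (volume : Measure ℝ) 1).restrict_preimage
    (s := Ioo (0:ℝ) 1) measurableSet_Ioo
  have h2 : (fun u : ℝ => 1 - u) ⁻¹' Ioo (0:ℝ) 1 = Ioo 0 1 := by
    ext u; simp only [mem_preimage, mem_Ioo]
    constructor <;> rintro ⟨a, b⟩ <;> constructor <;> linarith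
  rw [h2] at h
  exact h.map_eq

lemma map_V {d : ℕ} (μB : Measure (Fin d → ℝ)) [IsProbabilityMeasure μB]
    (hmarg : ∀ j, μB.map (fun x => x j) = bern (1/2)) (j : Fin d) :
    (μB.prod unif01).map (fun ω => ω.1 j * ω.2 + (1 - ω.1 j) * (1 - ω.2)) = unif01 := by
  have hg : Measurable (fun z : ℝ × ℝ => z.1 * z.2 + (1 - z.1) * (1 - z.2)) := by fun_prop
  have he : Measurable (fun x : Fin d → ℝ => x j) := by fun_prop
  have h1 : (μB.prod unif01).map (fun ω => ω.1 j * ω.2 + (1 - ω.1 j) * (1 - ω.2))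
      = ((μB.prod unif01).map (Prod.map (fun x : Fin d → ℝ => x j) id)).map
        (fun z : ℝ × ℝ => z.1 * z.2 + (1 - z.1) * (1 - z.2)) := by
    rw [Measure.map_map hg (he.prodMap measurable_id)]
    rfl
  rw [h1, ← Measure.map_prod_map _ _ he measurable_id, hmarg, Measure.map_id, bern]
  rw [Measure.add_prod, Measure.prod_smul_left, Measure.prod_smul_left, Measure.dirac_prod,
    Measure.dirac_prod, Measure.map_add _ _ hg, Measure.map_smul, Measure.map_smul,
    Measure.map_map hg measurable_prodMk_left, Measure.map_map hg measurable_prodMk_left]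
  have e1 : (fun z : ℝ × ℝ => z.1 * z.2 + (1 - z.1) * (1 - z.2)) ∘ Prod.mk 1 = id := by
    ext u; simp
  have e2 : (fun z : ℝ × ℝ => z.1 * z.2 + (1 - z.1) * (1 - z.2)) ∘ Prod.mk 0
      = fun u => 1 - u := by
    ext u; simp
  rw [e1, e2, Measure.map_id, map_one_sub_unif01, ← add_smul,
    ← ENNReal.ofReal_add (by norm_num) (by norm_num)]
  norm_num

lemma integral_G_eq (G : Measure ℝ) [IsProbabilityMeasure G] {m : ℝ}
    (hm : G.map (fun x => 2 * m - x) = G) (hi : Integrable (fun x : ℝ => x) G) :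
    ∫ x, x ∂G = m := by
  have h : ∫ x, x ∂G = ∫ x, (2 * m - x) ∂G := by
    conv_lhs => rw [← hm]
    rw [integral_map (by fun_prop) (by fun_prop)]
  rw [integral_sub (integrable_const _) hi] at h
  simp at h
  linarith

lemma cdf_symm (G : Measure ℝ) [IsProbabilityMeasure G] {m : ℝ}
    (hm : G.map (fun x => 2 * m - x) = G) (y : ℝ) :
    1 - cdfOf G y ≤ cdfOf G (2 * m - y) := by
  have h1 : cdfOf G y = G.real (Ici (2 * m - y)) := by
    have : G (Iic y) = G (Ici (2 * m - y)) := by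
      conv_lhs => rw [← hm]
      rw [Measure.map_apply (by fun_prop) measurableSet_Iic]
      congr 1
      ext u; simp only [mem_preimage, mem_Iic, mem_Ici]
      constructor <;> intro h <;> linarith
    simp only [cdfOf, this, Measure.real]
  have h2 : G.real (Iio (2 * m - y)) = 1 - G.real (Ici (2 * m - y)) := by
    rw [← probReal_compl_eq_one_sub measurableSet_Ici, compl_Ici]
  rw [h1, ← h2]
  exact measureReal_mono Iio_subset_Iic_self

lemma quantile_symm (G : Measure ℝ) [IsProbabilityMeasure G] {m : ℝ}
    (hm : G.map (fun x => 2 * m - x) = G) (hi : Integrable (fun x : ℝ => x) G) :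
    ∀ᵐ u ∂unif01, quantileFn (cdfOf G) (1 - u) = 2 * m - quantileFn (cdfOf G) u := by
  have hQ := aemeas_quantile G
  have hiQ : Integrable (quantileFn (cdfOf G)) unif01 := by
    have : Integrable (fun x : ℝ => x) (unif01.map (quantileFn (cdfOf G))) := by
      rwa [map_quantile]
    exact this.comp_aemeasurable hQ
  have hint : ∫ u, quantileFn (cdfOf G) u ∂unif01 = m := by
    rw [← integral_G_eq G hm hi]
    conv_rhs => rw [← map_quantile G]
    rw [integral_map hQ (by fun_prop)]
  have hmp : MeasurePreserving (fun u : ℝ => 1 - u) unif01 unif01 :=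
    ⟨by fun_prop, map_one_sub_unif01⟩
  have hiQ' : Integrable (fun u => quantileFn (cdfOf G) (1 - u)) unif01 :=
    (hmp.integrable_comp hiQ.aestronglyMeasurable).2 hiQ
  have hint' : ∫ u, quantileFn (cdfOf G) (1 - u) ∂unif01 = m := by
    rw [← hint]
    have hQ' : AEStronglyMeasurable (quantileFn (cdfOf G)) (unif01.map (fun u => 1 - u)) := by
      rw [map_one_sub_unif01]; exact hiQ.aestronglyMeasurable
    have := integral_map (μ := unif01) (φ := fun u : ℝ => 1 - u) (by fun_prop) hQ'
    rw [← this, map_one_sub_unif01]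
  have hle : quantileFn (cdfOf G) ≤ᵐ[unif01] fun u => 2 * m - quantileFn (cdfOf G) (1 - u) := by
    filter_upwards [ae_unif01] with u hu
    have hu' : 1 - u ∈ Ioo (0:ℝ) 1 := ⟨by linarith [hu.2], by linarith [hu.1]⟩
    refine le_of_forall_gt_imp_ge_of_dense fun z hz => ?_
    rw [quantile_le_iff G hu]
    have h1 : ¬ (quantileFn (cdfOf G) (1 - u) ≤ 2 * m - z) := by
      push Not; linarith
    rw [quantile_le_iff G hu'] at h1
    have h2 := cdf_symm G hm (2 * m - z)
    rw [sub_sub_cancel] at h2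
    linarith
  have heq := (integral_eq_iff_of_ae_le hiQ ((integrable_const (2 * m)).sub hiQ') hle).1 (by
    simp only [Pi.sub_apply]
    rw [integral_sub (integrable_const _) hiQ', hint, hint']; simp; ring)
  filter_upwards [heq] with u hu
  simp only [Pi.sub_apply] at hu
  linarith

lemma bern_ae : ∀ᵐ x ∂(bern (1/2)), x = 0 ∨ x = 1 := by
  have hs : MeasurableSet {x : ℝ | ¬ (x = 0 ∨ x = 1)} :=
    (((measurableSet_singleton (0:ℝ)).union (measurableSet_singleton (1:ℝ)))).compl
  rw [ae_iff, bern]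
  simp

lemma bern_integral (f : ℝ → ℝ) : ∫ x, f x ∂(bern (1/2)) = (f 1 + f 0) / 2 := by
  have h (c : ℝ) : Integrable f (Measure.dirac c) := integrable_dirac (by simp)
  rw [bern, integral_add_measure ((h 1).smul_measure (by simp)) ((h 0).smul_measure (by simp)),
    integral_smul_measure, integral_smul_measure, integral_dirac, integral_dirac]
  norm_num
  ring

lemma pearson_eq_cov {Ω : Type*} [MeasurableSpace Ω] (μ : Measure Ω) [IsProbabilityMeasure μ]
    {X Y : Ω → ℝ} (hX : MemLp X 2 μ) (hY : MemLp Y 2 μ) :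
    pearson μ X Y = covariance X Y μ / Real.sqrt (variance X μ * variance Y μ) := by
  rw [covariance_eq_sub hX hY]; rfl

lemma pearson_map {Ω : Type*} [MeasurableSpace Ω] (μ : Measure Ω) {d : ℕ}
    {Z : Ω → Fin d → ℝ} (hZ : AEMeasurable Z μ) (i j : Fin d) :
    pearson μ (fun ω => Z ω i) (fun ω => Z ω j)
      = pearson (μ.map Z) (fun x => x i) (fun x => x j) := by
  have hem (j : Fin d) : Measurable (fun x : Fin d → ℝ => x j) := by fun_prop
  unfold pearson
  have h2 : Measurable (fun x : Fin d → ℝ => x i * x j) := (hem i).mul (hem j)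
  beta_reduce
  rw [integral_map hZ h2.aestronglyMeasurable,
    integral_map hZ (hem i).aestronglyMeasurable, integral_map hZ (hem j).aestronglyMeasurable,
    variance_map (hem i).aemeasurable hZ, variance_map (hem j).aemeasurable hZ]
  rfl

set_option maxHeartbeats 2000000 in
/-- given a random vector `B` with `Bern(1/2)` margins and correlation
matrix `P`, and `U ~ U(0,1)` independent of `B`, the variables
`Vj = Bj·U + (1 − Bj)(1 − U)` are uniform on (0,1), `Yj = G⁻¹(Vj)` have distribution
`G`, and `ρ(Yi,Yj) = ρ(Bi,Bj)`; hence `P ∈ K_G`: every `Bern(1/2)`-compatible matrix is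
`κ_G`-compatible. -/
theorem bernoulli_compatible_implies_kappaG_compatible
    (G : Measure ℝ) [IsProbabilityMeasure G] (hG : ConcordanceInducing G)
    (d : ℕ) (P : Matrix (Fin d) (Fin d) ℝ)
    (μB : Measure (Fin d → ℝ)) [IsProbabilityMeasure μB]
    (hmarg : ∀ j, μB.map (fun x => x j) = bern (1/2))
    (hP : ∀ i j, P i j = pearson μB (fun x => x i) (fun x => x j)) :
    (∀ j : Fin d, (μB.prod unif01).map
        (fun ω => ω.1 j * ω.2 + (1 - ω.1 j) * (1 - ω.2)) = unif01) ∧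
    (∀ j : Fin d, (μB.prod unif01).map
        (fun ω => quantileFn (cdfOf G) (ω.1 j * ω.2 + (1 - ω.1 j) * (1 - ω.2))) = G) ∧
    (∀ i j : Fin d, pearson (μB.prod unif01)
        (fun ω => quantileFn (cdfOf G) (ω.1 i * ω.2 + (1 - ω.1 i) * (1 - ω.2)))
        (fun ω => quantileFn (cdfOf G) (ω.1 j * ω.2 + (1 - ω.1 j) * (1 - ω.2)))
        = pearson μB (fun x => x i) (fun x => x j)) ∧
    P ∈ corrSet G d := by
  obtain ⟨hnd, ⟨m, hm⟩, hsq⟩ := hG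
  have hV := map_V μB hmarg
  have hQ := aemeas_quantile G
  have hVm (j : Fin d) : Measurable (fun ω : (Fin d → ℝ) × ℝ =>
      ω.1 j * ω.2 + (1 - ω.1 j) * (1 - ω.2)) := by fun_prop
  have hYm (j : Fin d) : AEMeasurable (fun ω : (Fin d → ℝ) × ℝ =>
      quantileFn (cdfOf G) (ω.1 j * ω.2 + (1 - ω.1 j) * (1 - ω.2))) (μB.prod unif01) := by
    have h : AEMeasurable (quantileFn (cdfOf G)) ((μB.prod unif01).map (fun ω =>
      ω.1 j * ω.2 + (1 - ω.1 j) * (1 - ω.2))) := by rw [hV j]; exact hQ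
    exact h.comp_aemeasurable (hVm j).aemeasurable
  have hY (j : Fin d) : (μB.prod unif01).map
        (fun ω => quantileFn (cdfOf G) (ω.1 j * ω.2 + (1 - ω.1 j) * (1 - ω.2))) = G := by
    have h : AEMeasurable (quantileFn (cdfOf G)) ((μB.prod unif01).map (fun ω =>
      ω.1 j * ω.2 + (1 - ω.1 j) * (1 - ω.2))) := by rw [hV j]; exact hQ
    have h2 := AEMeasurable.map_map_of_aemeasurable h (hVm j).aemeasurable
    rw [hV j, map_quantile] at h2
    exact h2.symm
  have hL2 : MemLp (fun x : ℝ => x) 2 G :=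
    (memLp_two_iff_integrable_sq (by fun_prop)).2 hsq
  have hi : Integrable (fun x : ℝ => x) G := hL2.integrable (by norm_num)
  have hmean := integral_G_eq G hm hi
  have hsymm := quantile_symm G hm hi
  -- variance of G
  have hvar : variance (fun x : ℝ => x) G = ∫ x, (x - m) ^ 2 ∂G := by
    rw [variance_eq_integral (by fun_prop), hmean]
  have hvne : variance (fun x : ℝ => x) G ≠ 0 := by
    intro h0
    have h1 := ae_eq_integral_of_variance_eq_zero hL2 h0
    refine hnd m ?_
    have h2 : G.map (fun x : ℝ => x) = G.map (fun _ : ℝ => m) := by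
      refine Measure.map_congr ?_
      filter_upwards [h1] with x hx
      rw [hx, hmean]
    rw [show (fun x : ℝ => x) = id from rfl, Measure.map_id, Measure.map_const] at h2
    simpa using h2
  have hvpos : 0 < variance (fun x : ℝ => x) G := lt_of_le_of_ne (variance_nonneg _ _) hvne.symm
  have hW : ∫ u, (quantileFn (cdfOf G) u - m) ^ 2 ∂unif01 = variance (fun x : ℝ => x) G := by
    rw [hvar]
    conv_rhs => rw [← map_quantile G]
    rw [integral_map hQ (by fun_prop)]
  have hYL2 (j : Fin d) : MemLp (fun ω : (Fin d → ℝ) × ℝ =>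
      quantileFn (cdfOf G) (ω.1 j * ω.2 + (1 - ω.1 j) * (1 - ω.2))) 2 (μB.prod unif01) := by
    have h : MemLp (fun x : ℝ => x) 2 ((μB.prod unif01).map
        (fun ω => quantileFn (cdfOf G) (ω.1 j * ω.2 + (1 - ω.1 j) * (1 - ω.2)))) := by
      rw [hY j]; exact hL2
    exact h.comp_of_map (hYm j)
  have hYmean (j : Fin d) : ∫ ω, quantileFn (cdfOf G) (ω.1 j * ω.2 + (1 - ω.1 j) * (1 - ω.2))
      ∂(μB.prod unif01) = m := by
    rw [← hmean]
    conv_rhs => rw [← hY j]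
    rw [integral_map (hYm j) (by fun_prop)]
  have hYvar (j : Fin d) : variance (fun ω : (Fin d → ℝ) × ℝ =>
      quantileFn (cdfOf G) (ω.1 j * ω.2 + (1 - ω.1 j) * (1 - ω.2))) (μB.prod unif01)
      = variance (fun x : ℝ => x) G := by
    rw [← variance_id_map (hYm j), hY j]; rfl
  -- the Bernoulli vector
  have hem (j : Fin d) : Measurable (fun x : Fin d → ℝ => x j) := by fun_prop
  have hBae (j : Fin d) : ∀ᵐ x ∂μB, x j = 0 ∨ x j = 1 := by
    have h := bern_ae
    rw [← hmarg j] at h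
    exact ae_of_ae_map (hem j).aemeasurable h
  have hBint (j : Fin d) (f : ℝ → ℝ) (hf : Measurable f) :
      ∫ x, f (x j) ∂μB = (f 1 + f 0) / 2 := by
    rw [← bern_integral, ← hmarg j, integral_map (hem j).aemeasurable hf.aestronglyMeasurable]
  have hBmean (j : Fin d) : ∫ x, x j ∂μB = 1 / 2 := by
    rw [hBint j (fun t => t) measurable_id]; norm_num
  have hBvar (j : Fin d) : variance (fun x : Fin d → ℝ => x j) μB = 1 / 4 := by
    rw [variance_eq_integral (hem j).aemeasurable, hBmean j,
      hBint j (fun t => (t - 1 / 2) ^ 2) (by fun_prop)]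
    norm_num
  have hBL2 (j : Fin d) : MemLp (fun x : Fin d → ℝ => x j) 2 μB := by
    refine MemLp.of_bound (hem j).aestronglyMeasurable 1 ?_
    filter_upwards [hBae j] with x hx
    rcases hx with h | h <;> simp [h]
  have hYeq (j : Fin d) : ∀ᵐ ω ∂(μB.prod unif01),
      quantileFn (cdfOf G) (ω.1 j * ω.2 + (1 - ω.1 j) * (1 - ω.2)) - m
      = (2 * ω.1 j - 1) * (quantileFn (cdfOf G) ω.2 - m) := by
    have h1 : ∀ᵐ ω ∂(μB.prod unif01), ω.1 j = 0 ∨ ω.1 j = 1 :=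
      Measure.quasiMeasurePreserving_fst.ae (hBae j)
    have h2 : ∀ᵐ ω ∂(μB.prod unif01), quantileFn (cdfOf G) (1 - ω.2)
        = 2 * m - quantileFn (cdfOf G) ω.2 :=
      Measure.quasiMeasurePreserving_snd.ae hsymm
    filter_upwards [h1, h2] with ω h1 h2
    rcases h1 with h | h
    · rw [h]; simp only [zero_mul, sub_zero, one_mul, zero_add]; rw [h2]; ring
    · rw [h]; simp only [sub_self, one_mul, zero_mul, add_zero]; ring
  have hpear (i j : Fin d) : pearson (μB.prod unif01)
        (fun ω => quantileFn (cdfOf G) (ω.1 i * ω.2 + (1 - ω.1 i) * (1 - ω.2)))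
        (fun ω => quantileFn (cdfOf G) (ω.1 j * ω.2 + (1 - ω.1 j) * (1 - ω.2)))
        = pearson μB (fun x => x i) (fun x => x j) := by
    rw [pearson_eq_cov _ (hYL2 i) (hYL2 j), pearson_eq_cov _ (hBL2 i) (hBL2 j), hYvar, hYvar,
      hBvar, hBvar, Real.sqrt_mul_self hvpos.le, Real.sqrt_mul_self (by norm_num)]
    have hc : covariance (fun ω : (Fin d → ℝ) × ℝ =>
          quantileFn (cdfOf G) (ω.1 i * ω.2 + (1 - ω.1 i) * (1 - ω.2)))
        (fun ω => quantileFn (cdfOf G) (ω.1 j * ω.2 + (1 - ω.1 j) * (1 - ω.2))) (μB.prod unif01)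
        = (∫ x, (2 * x i - 1) * (2 * x j - 1) ∂μB) * variance (fun x : ℝ => x) G := by
      rw [covariance, hYmean, hYmean, ← hW, ← integral_prod_mul]
      refine integral_congr_ae ?_
      filter_upwards [hYeq i, hYeq j] with ω h1 h2
      rw [h1, h2]; ring
    have hb : ∫ x, (2 * x i - 1) * (2 * x j - 1) ∂μB
        = 4 * covariance (fun x : Fin d → ℝ => x i) (fun x => x j) μB := by
      rw [covariance, hBmean, hBmean, ← integral_const_mul]
      refine integral_congr_ae (Filter.Eventually.of_forall fun x => ?_)
      simp only
      ring
    rw [hc, hb]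
    field_simp
  refine ⟨hV, hY, hpear, ?_⟩
  have hvec : AEMeasurable (fun (ω : (Fin d → ℝ) × ℝ) (j : Fin d) =>
      quantileFn (cdfOf G) (ω.1 j * ω.2 + (1 - ω.1 j) * (1 - ω.2))) (μB.prod unif01) :=
    aemeasurable_pi_lambda _ hYm
  have hprob := Measure.isProbabilityMeasure_map hvec
  rw [corrSet, Set.mem_ofPred_eq]
  refine ⟨_, hprob, fun j => ?_, fun i j => ?_⟩
  · rw [AEMeasurable.map_map_of_aemeasurable (hem j).aemeasurable hvec]
    exact hY j
  · rw [hP, ← hpear i j]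
    exact pearson_map _ hvec i j
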